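/- Let (P, ε) be a counital idempotent in 𝒜, and let M, N be objects of 𝒜 with M ⊗ P ≅ M. Then post-composition with the morphism (N ◁ ε) ≫ ρ_N : N ⊗ P ⟶ N induces a bijection (indeed an isomorphism of abelian groups) Hom(M, N ⊗ P) ⟶ Hom(M, N). -/

import Mathlib

open CategoryTheory Category Limits MonoidalCategory Pretriangulated ZeroObject

/-!
Tensoring `ε` on the left defines a natural transformation `c : (- ⊗ P) ⟶ 𝟭`. Idempotency of `P`
makes `c` invertible at every `X ⊗ P`, hence at `M ≅ M ⊗ P`, and makes `c_N ▷ P` invertible.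
Naturality reads `(f ▷ P) ≫ c_Y = c_X ≫ f`, so `f : M ⟶ N ⊗ P` is recovered from `f ≫ c_N`: cancel
`c_N ▷ P` from `(f ≫ c_N) ▷ P` to find `f ▷ P`, then `c_M` from `c_M ≫ f`. Conversely
`g : M ⟶ N` lifts to `c_M⁻¹ ≫ (g ▷ P)`.
-/

section CopointedEndofunctor

variable {C : Type*} [Category C] {G : C ⥤ C} (c : G ⟶ 𝟭 C)

lemma postcompose_app_injective (M N : C) [Epi (c.app M)] [Mono (G.map (c.app N))] :
    Function.Injective (fun f : M ⟶ G.obj N => f ≫ c.app N) := by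
  intro f f' (hff' : f ≫ c.app N = f' ≫ c.app N)
  have map_eq : G.map f = G.map f' := by
    rw [← cancel_mono (G.map (c.app N)), ← G.map_comp, ← G.map_comp, hff']
  have app_comp_eq : c.app M ≫ f = c.app M ≫ f' :=
    calc
      c.app M ≫ f = G.map f ≫ c.app (G.obj N) := (c.naturality f).symm
      _ = G.map f' ≫ c.app (G.obj N) := by rw [map_eq]
      _ = c.app M ≫ f' := c.naturality f'
  exact (cancel_epi (c.app M)).1 app_comp_eq

lemma postcompose_app_surjective (M N : C) [IsSplitEpi (c.app M)] :
    Function.Surjective (fun f : M ⟶ G.obj N => f ≫ c.app N) := by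
  intro g
  have naturality_eq : G.map g ≫ c.app N = c.app M ≫ g := c.naturality g
  refine ⟨section_ (c.app M) ≫ G.map g, ?_⟩
  calc
    (section_ (c.app M) ≫ G.map g) ≫ c.app N = section_ (c.app M) ≫ c.app M ≫ g := by
      rw [assoc, naturality_eq]
    _ = g := IsSplitEpi.id_assoc (c.app M) g

end CopointedEndofunctor

section TensorRight

variable {C : Type*} [Category C] [MonoidalCategory C] {P : C} (ε : P ⟶ 𝟙_ C)

/-- The natural transformation `X ⊗ P ⟶ X` induced by `ε : P ⟶ 𝟙`, making `- ⊗ P` a copointed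
endofunctor. -/
@[simps]
def tensorRightCounit : tensorRight P ⟶ 𝟭 C where
  app X := (X ◁ ε) ≫ (ρ_ X).hom
  naturality X Y f := by
    simp [← whisker_exchange_assoc]

lemma isIso_tensorRightCounit_app_tensor (X : C) [IsIso ((P ◁ ε) ≫ (ρ_ P).hom)] :
    IsIso ((tensorRightCounit ε).app (X ⊗ P)) := by
  have app_eq : (tensorRightCounit ε).app (X ⊗ P) =
      (α_ X P P).hom ≫ (X ◁ ((P ◁ ε) ≫ (ρ_ P).hom)) := by
    simp
  rw [app_eq]
  infer_instance

lemma isIso_tensorRightCounit_app_whiskerRight (X : C) [IsIso ((ε ▷ P) ≫ (λ_ P).hom)] :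
    IsIso ((tensorRightCounit ε).app X ▷ P) := by
  have whiskerRight_eq : (tensorRightCounit ε).app X ▷ P =
      (α_ X P P).hom ≫ (X ◁ ((ε ▷ P) ≫ (λ_ P).hom)) := by
    simp
  rw [whiskerRight_eq]
  infer_instance

end TensorRight

theorem postcompose_counit_bijective_general {C : Type*} [Category C] [MonoidalCategory C]
    (P : C) (ε : P ⟶ 𝟙_ C)
    (hP : IsIso ((ε ▷ P) ≫ (λ_ P).hom) ∧ IsIso ((P ◁ ε) ≫ (ρ_ P).hom))
    (M N : C) (hM : Nonempty (M ⊗ P ≅ M)) :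
    Function.Bijective (fun f : M ⟶ N ⊗ P => f ≫ ((N ◁ ε) ≫ (ρ_ N).hom)) := by
  obtain ⟨_, _⟩ := hP
  obtain ⟨e⟩ := hM
  have : IsIso ((tensorRightCounit ε).app M) :=
    (NatTrans.isIso_app_iff_of_iso (tensorRightCounit ε) e).1
      (isIso_tensorRightCounit_app_tensor ε M)
  have : IsIso ((tensorRight P).map ((tensorRightCounit ε).app N)) :=
    isIso_tensorRightCounit_app_whiskerRight ε N
  exact ⟨postcompose_app_injective (tensorRightCounit ε) M N,
    postcompose_app_surjective (tensorRightCounit ε) M N⟩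

/-- Proposition (semiorthogonality): for a counital idempotent `(P, ε)` and objects `M, N`
with `M ⊗ P ≅ M`, post-composition with `(N ◁ ε) ≫ ρ_N : N ⊗ P ⟶ N` gives a bijection
`Hom(M, N ⊗ P) ⟶ Hom(M, N)`. -/
theorem postcompose_counit_bijective {𝒜 : Type*} [Category 𝒜] [MonoidalCategory 𝒜]
    [HasZeroObject 𝒜] [Preadditive 𝒜] [HasShift 𝒜 ℤ]
    [∀ n : ℤ, (shiftFunctor 𝒜 n).Additive] [Pretriangulated 𝒜]
    [∀ X : 𝒜, (tensorLeft X).Additive] [∀ X : 𝒜, (tensorRight X).Additive]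
    [∀ X : 𝒜, (tensorLeft X).CommShift ℤ] [∀ X : 𝒜, (tensorRight X).CommShift ℤ]
    [∀ X : 𝒜, (tensorLeft X).IsTriangulated] [∀ X : 𝒜, (tensorRight X).IsTriangulated]
    (P : 𝒜) (ε : P ⟶ 𝟙_ 𝒜)
    (hP : IsIso ((ε ▷ P) ≫ (λ_ P).hom) ∧ IsIso ((P ◁ ε) ≫ (ρ_ P).hom))
    (M N : 𝒜) (hM : Nonempty (M ⊗ P ≅ M)) :
    Function.Bijective (fun f : M ⟶ N ⊗ P => f ≫ ((N ◁ ε) ≫ (ρ_ N).hom)) :=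
  postcompose_counit_bijective_general P ε hP M N hM
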